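/- Conservation of Bias Over Distributions: Let B be a finite set of information resources with |B| = m, let τ_k = { t ⊆ Ω : |t| = k }, and let P = { D ∈ ℝ^m : D(f) ≥ 0 for all f ∈ B, ∑_{f∈B} D(f) = 1 } be the standard simplex of distributions over B, equipped with the (m−1)-dimensional Lebesgue measure on the affine hyperplane containing P. Then ∑_{t ∈ τ_k} ∫_P bias(D, t) dD = 0. -/

import Mathlib

/-!
For a fixed distribution `D`, the sum of `bias(D, t)` over all `k`-sets `t` already vanishes: each
point of `Ω` lies in `(n-1).choose (k-1)` of the `k`-sets, so summing a function of total mass `1`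
over all of them gives `(n-1).choose (k-1) = n.choose k * (k / n)`
(`sum_powersetCard_sum`), which is the total of the subtracted constants `p = k / n`.

It remains to interchange the finite sum with the integral, which needs integrability. The simplex
is compact and has finite `(m-1)`-dimensional Hausdorff measure, because it is covered by the image
of the cube `[0,1]^(m-1)` under an affine, hence Lipschitz, map (`simplex_subset_image`), and on
`ℝ^(m-1)` that Hausdorff measure is Lebesgue measure.
-/

open MeasureTheory

/-- Double counting of the pairs `ω ∈ t` with `t` a `k`-set, weighted by `a ω`. -/
lemma sum_powersetCard_sum {Ω : Type*} [Fintype Ω] (k : ℕ) (hk1 : 1 ≤ k)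
    (hk2 : k ≤ Fintype.card Ω) (a : Ω → ℝ) :
    ∑ t ∈ Finset.powersetCard k (Finset.univ : Finset Ω), ∑ ω ∈ t, a ω
      = ((Fintype.card Ω).choose k : ℝ) * ((k : ℝ) / Fintype.card Ω) * ∑ ω, a ω := by
  classical
  have hcount : ∀ ω : Ω, (((Finset.powersetCard k (Finset.univ : Finset Ω)).filter
      (fun t => ω ∈ t)).card : ℝ)
      = ((Fintype.card Ω).choose k : ℝ) * ((k : ℝ) / Fintype.card Ω) := by
    intro ω
    have h := Finset.card_filter_powersetCard_subset {ω} (Finset.univ : Finset Ω) k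
      (Finset.subset_univ _) (by simpa using hk1)
    simp only [Finset.singleton_subset_iff, Finset.card_singleton, Finset.card_univ] at h
    rw [h]
    obtain ⟨j, rfl⟩ : ∃ j, k = j + 1 := ⟨k - 1, by omega⟩
    obtain ⟨N, hN⟩ : ∃ N, Fintype.card Ω = N + 1 := ⟨Fintype.card Ω - 1, by omega⟩
    have hc : ((N : ℝ) + 1) * (N.choose j : ℝ)
        = ((N + 1).choose (j + 1) : ℝ) * ((j : ℝ) + 1) := by
      exact_mod_cast Nat.add_one_mul_choose_eq N j
    rw [hN]
    simp only [Nat.add_sub_cancel]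
    push_cast
    field_simp
    linarith
  calc ∑ t ∈ Finset.powersetCard k (Finset.univ : Finset Ω), ∑ ω ∈ t, a ω
      = ∑ t ∈ Finset.powersetCard k (Finset.univ : Finset Ω),
          ∑ ω, if ω ∈ t then a ω else 0 := by
        simp
    _ = ∑ ω, ∑ t ∈ Finset.powersetCard k (Finset.univ : Finset Ω),
          if ω ∈ t then a ω else 0 := Finset.sum_comm
    _ = ∑ ω, ((Fintype.card Ω).choose k : ℝ) * ((k : ℝ) / Fintype.card Ω) * a ω := by
        refine Finset.sum_congr rfl fun ω _ => ?_
        rw [← Finset.sum_filter, Finset.sum_const, nsmul_eq_mul, hcount]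
    _ = _ := by rw [Finset.mul_sum]

/-- The affine parametrization of the hyperplane `∑ f, D f = 1` by the coordinates other than `f₀`,
the coordinate at `f₀` being determined by the others. -/
noncomputable def simplexParam {B : Type*} [Fintype B] [DecidableEq B] (f₀ : B)
    (x : {f : B // ¬ f = f₀} → ℝ) : EuclideanSpace ℝ B :=
  EuclideanSpace.single f₀ (1 : ℝ)
    + (∑ i : {f : B // ¬ f = f₀},
        (ContinuousLinearMap.proj (R := ℝ) (φ := fun _ : {f : B // ¬ f = f₀} => ℝ) i).smulRight
          (EuclideanSpace.single (i : B) (1 : ℝ) - EuclideanSpace.single f₀ (1 : ℝ))) x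

lemma exists_lipschitzWith_simplexParam {B : Type*} [Fintype B] [DecidableEq B] (f₀ : B) :
    ∃ K, LipschitzWith K (simplexParam f₀) :=
  ⟨_, (LipschitzWith.const _).add (ContinuousLinearMap.lipschitz _)⟩

lemma simplex_subset_image {B : Type*} [Fintype B] [DecidableEq B] (f₀ : B) :
    {D : EuclideanSpace ℝ B | (∀ f, 0 ≤ D f) ∧ ∑ f, D f = 1}
      ⊆ simplexParam f₀ '' Set.Icc 0 1 := by
  rintro D ⟨h0, h1⟩
  refine ⟨fun i => D i, ⟨fun i => h0 i, fun i => ?_⟩, ?_⟩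
  · rw [Pi.one_apply, ← h1]
    exact Finset.single_le_sum (fun f _ => h0 f) (Finset.mem_univ _)
  · -- The sum over `f ≠ f₀` may be extended to all of `B`, as its `f₀` term would be zero.
    have hs := Fintype.sum_subtype_add_sum_subtype (fun f => f = f₀)
      (fun f => D f • (EuclideanSpace.single f (1 : ℝ) - EuclideanSpace.single f₀ (1 : ℝ)))
    rw [Finset.sum_eq_zero, zero_add] at hs
    swap
    · rintro ⟨f, rfl⟩ -
      rw [sub_self, smul_zero]
    simp only [simplexParam, _root_.sum_apply, ContinuousLinearMap.smulRight_apply,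
      ContinuousLinearMap.proj_apply]
    rw [hs]
    simp only [smul_sub, Finset.sum_sub_distrib, ← Finset.sum_smul, h1, one_smul]
    ext g
    simp [Pi.single_apply]

lemma isCompact_simplex {B : Type*} [Fintype B] :
    IsCompact {D : EuclideanSpace ℝ B | (∀ f, 0 ≤ D f) ∧ ∑ f, D f = 1} := by
  classical
  have hclosed : IsClosed {D : EuclideanSpace ℝ B | (∀ f, 0 ≤ D f) ∧ ∑ f, D f = 1} := by
    rw [Set.ofPred_and, Set.ofPred_forall]
    exact (isClosed_iInter fun f => isClosed_le (by fun_prop) (by fun_prop)).inter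
      (isClosed_eq (by fun_prop) (by fun_prop))
  rcases isEmpty_or_nonempty B with hB | ⟨⟨f₀⟩⟩
  · simp
  · obtain ⟨K, hK⟩ := exists_lipschitzWith_simplexParam f₀
    exact (isCompact_Icc.image hK.continuous).of_isClosed_subset hclosed (simplex_subset_image f₀)

lemma hausdorffMeasure_simplex_lt_top {B : Type*} [Fintype B] :
    μH[(Fintype.card B : ℝ) - 1]
      {D : EuclideanSpace ℝ B | (∀ f, 0 ≤ D f) ∧ ∑ f, D f = 1} < ⊤ := by
  classical
  rcases isEmpty_or_nonempty B with hB | ⟨⟨f₀⟩⟩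
  · simp
  · obtain ⟨K, hK⟩ := exists_lipschitzWith_simplexParam f₀
    have hcard : (Fintype.card B : ℝ) - 1 = (Fintype.card {f : B // ¬ f = f₀} : ℝ) := by
      have h1 : 1 ≤ Fintype.card B := Fintype.card_pos_iff.2 ⟨f₀⟩
      rw [Fintype.card_subtype_compl, Fintype.card_subtype_eq, Nat.cast_sub h1, Nat.cast_one]
    rw [hcard]
    refine (measure_mono (simplex_subset_image f₀)).trans_lt
      ((hK.hausdorffMeasure_image_le (Nat.cast_nonneg _) _).trans_lt ?_)
    rw [hausdorffMeasure_pi_real]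
    exact ENNReal.mul_lt_top (ENNReal.rpow_lt_top_of_nonneg (Nat.cast_nonneg _) ENNReal.coe_ne_top)
      isCompact_Icc.measure_lt_top

/-- **Conservation of Bias Over Distributions.**
Summing over all size-`k` target sets `t` the integral of `bias(D,t)` over the
standard simplex `P` of distributions over `B` (with respect to the
`(m-1)`-dimensional Hausdorff (Lebesgue) measure on the affine hyperplane
containing `P`) yields zero. -/
theorem conservation_of_bias_over_distributions
    {Ω B : Type*} [Fintype Ω] [Fintype B]
    (m : ℕ) (hm : Fintype.card B = m)
    (Pbar : B → Ω → ℝ)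
    (hP0 : ∀ f ω, 0 ≤ Pbar f ω)
    (hP1 : ∀ f, ∑ ω, Pbar f ω = 1)
    (k : ℕ) (hk1 : 1 ≤ k) (hk2 : k ≤ Fintype.card Ω)
    (Pset : Set (EuclideanSpace ℝ B))
    (hPset : Pset = {D | (∀ f, 0 ≤ D f) ∧ ∑ f, D f = 1}) :
    ∑ t ∈ Finset.powersetCard k (Finset.univ : Finset Ω),
      ∫ D in Pset,
        ((∑ f, D f * ∑ ω ∈ t, Pbar f ω) - (k : ℝ) / (Fintype.card Ω))
          ∂(μH[(m : ℝ) - 1]) = 0 := by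
  subst hm
  have hcomp : IsCompact Pset := hPset ▸ isCompact_simplex
  have hfin : μH[(Fintype.card B : ℝ) - 1] Pset < ⊤ := hPset ▸ hausdorffMeasure_simplex_lt_top
  have : IsFiniteMeasure ((μH[(Fintype.card B : ℝ) - 1] : Measure (EuclideanSpace ℝ B)).restrict
      Pset) := ⟨by simpa using hfin⟩
  rw [← integral_finsetSum]
  · refine setIntegral_eq_zero_of_forall_eq_zero fun D hD => ?_
    rw [hPset] at hD
    rw [Finset.sum_sub_distrib, Finset.sum_comm]
    simp only [← Finset.mul_sum, sum_powersetCard_sum k hk1 hk2, hP1, mul_one, ← Finset.sum_mul,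
      hD.2, one_mul, Finset.sum_const, Finset.card_powersetCard, Finset.card_univ, nsmul_eq_mul,
      sub_self]
  · intro t _
    -- The Hausdorff measure need not be finite on compact sets of the ambient space; its
    -- restriction to the simplex is.
    have hint : IntegrableOn
        (fun D : EuclideanSpace ℝ B =>
          (∑ f, D f * ∑ ω ∈ t, Pbar f ω) - (k : ℝ) / (Fintype.card Ω)) Pset
        ((μH[(Fintype.card B : ℝ) - 1]).restrict Pset) :=
      ContinuousOn.integrableOn_compact hcomp (by fun_prop)
    rwa [IntegrableOn, Measure.restrict_restrict hcomp.measurableSet, Set.inter_self] at hint
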